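/- arXiv:2110.04728 — 7 statements merged into one kernel-verified Lean document; each statement's English description precedes it below -/
import Mathlib

section
/- Let ψ : ℝ → ℝ^n be a Poisson stable function with Poisson sequence (t_k), and suppose that for some ω > 0 the Poisson number κ_ω of (t_k) with respect to ω equals zero. Then for every continuous ω-periodic function g : ℝ → ℝ^n, the difference ψ(t) − g(t) is Poisson stable; consequently ψ(t) = g(t) + (ψ(t) − g(t)) is a modulo periodic Poisson stable function. -/
/-!
The Poisson number is an infimum that is attained at `0`: a shift exists because the residues
of `t_k` modulo `ω` lie in the compact interval `[0, ω]` (`exists_isPoissonShift`; without this,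
`κ_ω = 0` could be the junk value of `sInf ∅`), and shifts arbitrarily close to `0` make `0`
itself a shift by a diagonal extraction (`isPoissonShift_zero`). Hence some subsequence of `(t_k)`
tends to `0` modulo `ω`. Along it the translates of a continuous `ω`-periodic `g` converge to `g`
uniformly on compact intervals (`Function.Periodic.tendstoUniformlyOn_translates`), and so do
those of `ψ`, so that the subsequence is a Poisson sequence of `ψ - g`.
-/

open Filter Topology

/-- `s l → τ (mod ω)`: the distance from `s l − τ` to the set `ωℤ` tends to `0`. -/
def TendsToModulo (s : ℕ → ℝ) (τ ω : ℝ) : Prop :=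
  Tendsto (fun l => Metric.infDist (s l - τ) (Set.range fun m : ℤ => ω * (m : ℝ)))
    atTop (𝓝 0)

/-- `τ ∈ [0, ω)` is a Poisson shift of `(t_k)` with respect to `ω` if some subsequence
of `(t_k)` converges to `τ` modulo `ω`. -/
def IsPoissonShift (t : ℕ → ℝ) (ω τ : ℝ) : Prop :=
  0 ≤ τ ∧ τ < ω ∧ ∃ φ : ℕ → ℕ, StrictMono φ ∧ TendsToModulo (t ∘ φ) τ ω

/-- The Poisson number `κ_ω` is the infimum of the set `T_ω` of Poisson shifts. -/
noncomputable def poissonNumber (t : ℕ → ℝ) (ω : ℝ) : ℝ :=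
  sInf {τ | IsPoissonShift t ω τ}

/-- A continuous bounded function `f` is Poisson stable with Poisson sequence `(t_k)` if
`t_k → ∞` and `f (· + t_k) → f` uniformly on every bounded interval of `ℝ`. -/
def PoissonStableWith {E : Type*} [NormedAddCommGroup E] (f : ℝ → E) (t : ℕ → ℝ) : Prop :=
  Continuous f ∧ (∃ M, ∀ x, ‖f x‖ ≤ M) ∧ Tendsto t atTop atTop ∧
    ∀ a b : ℝ, TendstoUniformlyOn (fun k x => f (x + t k)) f atTop (Set.Icc a b)

/-- A function is Poisson stable if it admits some Poisson sequence. -/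
def PoissonStable {E : Type*} [NormedAddCommGroup E] (f : ℝ → E) : Prop :=
  ∃ t : ℕ → ℝ, PoissonStableWith f t

/-- The sum of a continuous `ω`-periodic function and a Poisson stable function. -/
def IsMPPS {n : ℕ} (f : ℝ → (Fin n → ℝ)) : Prop :=
  ∃ (φ ψ : ℝ → (Fin n → ℝ)) (ω : ℝ), 0 < ω ∧ Continuous φ ∧ Function.Periodic φ ω ∧
    PoissonStable ψ ∧ ∀ t, f t = φ t + ψ t

/-- Bolzano–Weierstrass modulo `ω`: the set of Poisson shifts is never empty. -/
lemma exists_isPoissonShift (t : ℕ → ℝ) {ω : ℝ} (hω : 0 < ω) : ∃ τ, IsPoissonShift t ω τ := by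
  obtain ⟨a, ha, φ, hφ, hlim⟩ := (isCompact_Icc (a := (0 : ℝ)) (b := ω)).tendsto_subseq
    (x := fun k => toIcoMod hω 0 (t k))
    (fun k => Set.Ico_subset_Icc_self (toIcoMod_mem_Ico' hω (t k)))
  -- The limit `a` may equal `ω`, in which case the shift is `0`; both cases are covered by
  -- a representative `τ` of `a` modulo `ω`.
  obtain ⟨τ, j, hτ0, hτω, hj⟩ : ∃ (τ : ℝ) (j : ℤ), 0 ≤ τ ∧ τ < ω ∧ τ = a - ω * j := by
    rcases ha.2.lt_or_eq with h | h
    · exact ⟨a, 0, ha.1, h, by simp⟩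
    · exact ⟨0, 1, le_rfl, hω, by simp [h]⟩
  refine ⟨τ, hτ0, hτω, φ, hφ, ?_⟩
  refine squeeze_zero (fun _ => Metric.infDist_nonneg) (fun l => ?_)
    (tendsto_iff_dist_tendsto_zero.1 hlim)
  have h := self_sub_toIcoMod_eq_mul hω 0 (t (φ l))
  refine (Metric.infDist_le_dist_of_mem (Set.mem_range_self (toIcoDiv hω 0 (t (φ l)) + j))).trans_eq ?_
  simp only [Function.comp_apply, Real.dist_eq]
  congr 1
  push_cast
  rw [hj]
  linarith

/-- If the Poisson number vanishes, the infimum is attained: `0` is a Poisson shift. -/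
lemma isPoissonShift_zero {t : ℕ → ℝ} {ω : ℝ} (hω : 0 < ω) (hκ : poissonNumber t ω = 0) :
    IsPoissonShift t ω 0 := by
  have key : ∀ m : ℕ, ∃ᶠ k in atTop,
      Metric.infDist (t k - 0) (Set.range fun m : ℤ => ω * (m : ℝ)) < 1 / ((m : ℝ) + 1) := by
    intro m
    set ε : ℝ := 1 / ((m : ℝ) + 1) with hε
    have hε0 : 0 < ε := by positivity
    have hne : {τ | IsPoissonShift t ω τ}.Nonempty := exists_isPoissonShift t hω
    have hlt : sInf {τ | IsPoissonShift t ω τ} < ε / 2 := by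
      rw [show sInf {τ | IsPoissonShift t ω τ} = 0 from hκ]
      positivity
    obtain ⟨τ, ⟨hτ0, -, φ, hφ, hlim⟩, hτ⟩ := exists_lt_of_csInf_lt hne hlt
    refine hφ.tendsto_atTop.frequently (Eventually.frequently ?_)
    filter_upwards [hlim.eventually_lt_const (half_pos hε0)] with l hl
    have h := Metric.infDist_le_infDist_add_dist
      (s := Set.range fun m : ℤ => ω * (m : ℝ)) (x := t (φ l) - 0) (y := t (φ l) - τ)
    have hd : dist (t (φ l) - 0) (t (φ l) - τ) = τ := by
      rw [Real.dist_eq, show t (φ l) - 0 - (t (φ l) - τ) = τ by ring, abs_of_nonneg hτ0]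
    simp only [Function.comp_apply] at hl
    linarith
  obtain ⟨φ, hφ, h⟩ := extraction_forall_of_frequently key
  exact ⟨le_rfl, hω, φ, hφ, squeeze_zero (fun _ => Metric.infDist_nonneg) (fun l => (h l).le)
    tendsto_one_div_add_atTop_nhds_zero_nat⟩

lemma Function.Periodic.tendstoUniformlyOn_translates {E : Type*} [NormedAddCommGroup E]
    {g : ℝ → E} {ω : ℝ} (hgp : Function.Periodic g ω) (hgc : Continuous g) {s : ℕ → ℝ}
    (hs : TendsToModulo s 0 ω) (a b : ℝ) :
    TendstoUniformlyOn (fun k x => g (x + s k)) g atTop (Set.Icc a b) := by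
  rw [Metric.tendstoUniformlyOn_iff]
  intro ε hε
  obtain ⟨δ, hδ, H⟩ := Metric.mem_uniformity_dist.1
    ((isCompact_Icc (a := a) (b := b)).uniformContinuousAt_of_continuousAt g
      (fun x _ => hgc.continuousAt) (Metric.dist_mem_uniformity hε))
  filter_upwards [hs.eventually_lt_const hδ] with k hk x hx
  obtain ⟨_, ⟨m, rfl⟩, hm⟩ := (Metric.infDist_lt_iff (Set.range_nonempty _)).1 hk
  -- By periodicity `s k` may be replaced by the small number `s k - ω * m`.
  rw [← hgp.sub_int_mul_eq (x := x + s k) m]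
  refine H (a := x) (b := x + s k - m * ω) ?_ hx
  rw [Real.dist_eq] at hm ⊢
  rw [abs_sub_comm]
  convert hm using 2
  ring

/-- If `ψ` is Poisson stable with Poisson sequence `(t_k)` whose Poisson number `κ_ω`
equals zero for some `ω > 0`, then for every continuous `ω`-periodic `g` the difference
`ψ − g` is Poisson stable; consequently `ψ = g + (ψ − g)` is an MPPS function. -/
theorem statement3 {n : ℕ} (ω : ℝ) (hω : 0 < ω)
    (ψ g : ℝ → (Fin n → ℝ)) (tk : ℕ → ℝ)
    (hψ : PoissonStableWith ψ tk)
    (hκ : poissonNumber tk ω = 0)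
    (hgc : Continuous g) (hgp : Function.Periodic g ω) :
    PoissonStable (fun t => ψ t - g t) ∧ IsMPPS ψ := by
  obtain ⟨hψc, ⟨M, hM⟩, htk, hψu⟩ := hψ
  obtain ⟨-, -, φ, hφ, hlim⟩ := isPoissonShift_zero hω hκ
  have hstable : PoissonStable (fun t => ψ t - g t) := by
    obtain ⟨C, hC⟩ := (hgp.isBounded_of_continuous hω.ne' hgc).exists_norm_le
    refine ⟨tk ∘ φ, hψc.sub hgc, ⟨M + C, fun x => ?_⟩, htk.comp hφ.tendsto_atTop, fun a b => ?_⟩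
    · exact (norm_sub_le _ _).trans (add_le_add (hM x) (hC _ ⟨x, rfl⟩))
    · have hψφ : TendstoUniformlyOn (fun k x => ψ (x + (tk ∘ φ) k)) ψ atTop (Set.Icc a b) :=
        fun u hu => hφ.tendsto_atTop.eventually (hψu a b u hu)
      exact hψφ.sub (hgp.tendstoUniformlyOn_translates hgc hlim a b)
  exact ⟨hstable, g, fun t => ψ t - g t, ω, hω, hgc, hgp, hstable, fun t => by simp⟩
end

section
/- Let U ⊆ ℝ^n and let G : ℝ × U → ℝ^n be continuous, Poisson stable in t with Poisson sequence (t_k) uniformly with respect to u ∈ U (i.e. sup_{u∈U} ‖G(t + t_k, u) − G(t, u)‖ → 0 uniformly for t in every bounded interval), and satisfy ‖G(t, u₁) − G(t, u₂)‖ ≤ L‖u₁ − u₂‖ for all t ∈ ℝ and u₁, u₂ ∈ U, where L > 0. Let υ : ℝ → U be a continuous ω-periodic function. If the Poisson number κ_ω of (t_k) with respect to ω equals zero, then the function t ↦ G(t, υ(t)) is Poisson stable. -/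
/-!
By compactness of `[0, ω]` the set of Poisson shifts is nonempty, so a zero Poisson number yields
shifts arbitrarily close to `0`; hence `t_k` comes arbitrarily close to `ωℤ` for infinitely many `k`,
and a diagonal choice gives a single subsequence `t_{φ k}` converging to `0` modulo `ω`
(`exists_subseq_near_multiples`). Along it `υ(x + t_{φ k}) → υ(x)` uniformly on bounded intervals,
by periodicity and uniform continuity on compact sets (`periodic_shift_close`). The conclusion
follows from
`‖G(x+s, υ(x+s)) - G(x, υ x)‖ ≤ L ‖υ(x+s) - υ x‖ + ‖G(x+s, υ x) - G(x, υ x)‖`.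
-/

open Filter Topology

lemma infDist_multiples_lt_iff {x ω ε : ℝ} :
    Metric.infDist x (Set.range fun m : ℤ => ω * (m : ℝ)) < ε ↔ ∃ m : ℤ, |x - ω * m| < ε := by
  rw [Metric.infDist_lt_iff (Set.range_nonempty _)]
  simp [Real.dist_eq]

lemma tendsToModulo_iff {s : ℕ → ℝ} {τ ω : ℝ} :
    TendsToModulo s τ ω ↔
      ∀ ε > 0, ∀ᶠ l in atTop, ∃ m : ℤ, |s l - τ - ω * m| < ε := by
  simp only [TendsToModulo, Metric.tendsto_nhds, Real.dist_eq, sub_zero,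
    abs_of_nonneg Metric.infDist_nonneg, infDist_multiples_lt_iff]

/-- If the Poisson number vanishes, some subsequence converges to `0` modulo `ω`; that is, the
infimum of the Poisson shifts is attained. -/
lemma exists_subseq_near_multiples {t : ℕ → ℝ} {ω : ℝ} (hω : 0 < ω)
    (hκ : poissonNumber t ω = 0) :
    ∃ φ : ℕ → ℕ, StrictMono φ ∧ ∀ k : ℕ, ∃ m : ℤ, |t (φ k) - ω * m| < 1 / ((k : ℝ) + 1) := by
  refine extraction_forall_of_frequently
    (P := fun (k j : ℕ) => ∃ m : ℤ, |t j - ω * m| < 1 / ((k : ℝ) + 1)) fun k => ?_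
  have hε : (0 : ℝ) < 1 / ((k : ℝ) + 1) := Nat.one_div_pos_of_nat
  obtain ⟨τ, ⟨hτ0, -, ψ, hψ, hmod⟩, hτ⟩ :=
    exists_lt_of_csInf_lt (exists_isPoissonShift t hω) (hκ.trans_lt (half_pos hε))
  refine hψ.tendsto_atTop.frequently (Eventually.frequently ?_)
  filter_upwards [tendsToModulo_iff.1 hmod _ (half_pos hε)] with l ⟨m, hm⟩
  refine ⟨m, ?_⟩
  simp only [Function.comp_apply] at hm
  rw [abs_lt] at hm ⊢
  constructor <;> linarith [hm.1, hm.2]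

/-- On a bounded interval, a continuous `ω`-periodic function moves little under any shift close to
a multiple of `ω`, uniformly in the multiple. -/
lemma periodic_shift_close {E : Type*} [PseudoMetricSpace E] {υ : ℝ → E} {ω : ℝ}
    (hc : Continuous υ) (hp : Function.Periodic υ ω) (a b : ℝ) {ε : ℝ} (hε : 0 < ε) :
    ∃ δ > 0, ∀ (s : ℝ) (m : ℤ), |s - ω * m| < δ → ∀ x ∈ Set.Icc a b,
      dist (υ (x + s)) (υ x) < ε := by
  obtain ⟨δ, hδ, h⟩ := Metric.uniformContinuousOn_iff.1
    ((isCompact_Icc (a := a - 1) (b := b + 1)).uniformContinuousOn_of_continuous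
      hc.continuousOn) ε hε
  refine ⟨min δ 1, lt_min hδ one_pos, fun s m hs x hx => ?_⟩
  have hs1 := abs_lt.1 (hs.trans_le (min_le_right _ _))
  have hper : υ (x + s) = υ (x + (s - ω * m)) := by
    rw [← hp.sub_int_mul_eq m]
    congr 1
    ring
  rw [hper]
  refine h _ ⟨by linarith [hx.1], by linarith [hx.2]⟩ _
    ⟨by linarith [hx.1], by linarith [hx.2]⟩ ?_
  rw [Real.dist_eq, add_sub_cancel_left]
  exact hs.trans_le (min_le_left _ _)

/-- Lemma 6: if `G(t,u)` is Poisson stable in `t` (with sequence `(t_k)`) uniformly with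
respect to `u ∈ U`, Lipschitz in `u` on `U`, and `υ` is continuous `ω`-periodic with
values in `U`, where the Poisson number `κ_ω` of `(t_k)` equals zero, then
`t ↦ G(t, υ(t))` is Poisson stable. -/
theorem statement4 {n : ℕ} (U : Set (Fin n → ℝ))
    (G : ℝ → (Fin n → ℝ) → (Fin n → ℝ)) (tk : ℕ → ℝ) (L ω : ℝ)
    (hL : 0 < L) (hω : 0 < ω)
    (hGc : ContinuousOn (fun p : ℝ × (Fin n → ℝ) => G p.1 p.2) (Set.univ ×ˢ U))
    (hGb : ∃ M, ∀ t : ℝ, ∀ u ∈ U, ‖G t u‖ ≤ M)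
    (htk : Tendsto tk atTop atTop)
    (hGps : ∀ a b : ℝ, ∀ ε > 0, ∃ N, ∀ k ≥ N, ∀ t ∈ Set.Icc a b, ∀ u ∈ U,
      ‖G (t + tk k) u - G t u‖ < ε)
    (hGlip : ∀ t : ℝ, ∀ u₁ ∈ U, ∀ u₂ ∈ U, ‖G t u₁ - G t u₂‖ ≤ L * ‖u₁ - u₂‖)
    (υ : ℝ → (Fin n → ℝ)) (hυc : Continuous υ) (hυp : Function.Periodic υ ω)
    (hυU : ∀ t, υ t ∈ U)
    (hκ : poissonNumber tk ω = 0) :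
    PoissonStable (fun t => G t (υ t)) := by
  obtain ⟨φ, hφ, hnear⟩ := exists_subseq_near_multiples hω hκ
  refine ⟨tk ∘ φ, ?_, ?_, htk.comp hφ.tendsto_atTop, fun a b => ?_⟩
  · exact hGc.comp_continuous (continuous_id.prodMk hυc) fun t => ⟨trivial, hυU t⟩
  · obtain ⟨M, hM⟩ := hGb
    exact ⟨M, fun t => hM t _ (hυU t)⟩
  · rw [Metric.tendstoUniformlyOn_iff]
    intro ε hε
    obtain ⟨δ, hδ, hshift⟩ := periodic_shift_close hυc hυp a b (div_pos (half_pos hε) hL)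
    obtain ⟨N, hN⟩ := hGps a b (ε / 2) (half_pos hε)
    have hsmall : ∀ᶠ k : ℕ in atTop, 1 / ((k : ℝ) + 1) < δ :=
      tendsto_one_div_add_atTop_nhds_zero_nat.eventually_lt_const hδ
    filter_upwards [hsmall, hφ.tendsto_atTop.eventually_ge_atTop N] with k hkδ hkN x hx
    obtain ⟨m, hm⟩ := hnear k
    have h1 := hshift _ m (hm.trans hkδ) x hx
    rw [dist_eq_norm, lt_div_iff₀' hL] at h1
    have h2 := hN _ hkN x hx _ (hυU x)
    have h3 := hGlip (x + tk (φ k)) _ (hυU (x + tk (φ k))) _ (hυU x)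
    rw [dist_comm, dist_eq_norm]
    calc ‖G (x + tk (φ k)) (υ (x + tk (φ k))) - G x (υ x)‖
        ≤ ‖G (x + tk (φ k)) (υ (x + tk (φ k))) - G (x + tk (φ k)) (υ x)‖
          + ‖G (x + tk (φ k)) (υ x) - G x (υ x)‖ := norm_sub_le_norm_sub_add_norm_sub _ _ _
      _ < ε := by linarith
end

section
/- Let U ⊆ ℝ^n and let G : ℝ × U → ℝ^n be continuous, ω-periodic in t, and satisfy ‖G(t, u₁) − G(t, u₂)‖ ≤ L‖u₁ − u₂‖ for all t ∈ ℝ and u₁, u₂ ∈ U, where L > 0. Let υ : ℝ → U be a Poisson stable function with Poisson sequence (t_k). If the Poisson number κ_ω of (t_k) with respect to ω equals zero, then the function t ↦ G(t, υ(t)) is Poisson stable. -/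
/-!
Since `κ_ω = inf T_ω = 0`, there are Poisson shifts arbitrarily close to `0`, so for every `ε > 0`
infinitely many `t_k` lie within `ε` of `ωℤ` (`exists_near_lattice`). As `sInf ∅ = 0` in Lean, this
also needs `T_ω ≠ ∅`, which is Bolzano–Weierstrass applied to the residues of `t_k` modulo `ω`
(`exists_isPoissonShift`). Hence one can choose indices `k_j ≥ j` and integers `m_j` with
`t_{k_j} - ω m_j → 0`, and `(t_{k_j})` is a Poisson sequence of `t ↦ G(t, υ(t))`: writing
`δ_j = t_{k_j} - ω m_j` and using periodicity,
`‖G(x + t_{k_j}, υ(x + t_{k_j})) - G(x, υ(x))‖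
  ≤ L ‖υ(x + t_{k_j}) - υ(x)‖ + ‖G(x + δ_j, υ(x)) - G(x, υ(x))‖`,
where the first term is uniformly small on `[a, b]` by Poisson stability of `υ`, and the second by
uniform continuity of `G` on the compact set `[a - 1, b + 1] × υ([a, b])`.
-/

open Filter Topology

lemma exists_near_lattice (t : ℕ → ℝ) {ω : ℝ} (hω : 0 < ω) (hκ : poissonNumber t ω = 0)
    {ε : ℝ} (hε : 0 < ε) (N : ℕ) : ∃ k, N ≤ k ∧ ∃ m : ℤ, |t k - ω * (m : ℝ)| < ε := by
  have hlt : sInf {τ | IsPoissonShift t ω τ} < ε / 2 := by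
    change poissonNumber t ω < ε / 2
    linarith
  obtain ⟨τ, ⟨hτ0, -, φ, hφ, hmod⟩, hτε⟩ :=
    exists_lt_of_csInf_lt (exists_isPoissonShift t hω) hlt
  have hev := (Tendsto.eventually_lt_const (half_pos hε) hmod).and (eventually_ge_atTop N)
  obtain ⟨l, hl, hNl⟩ := hev.exists
  obtain ⟨_, ⟨m, rfl⟩, hm⟩ := (Metric.infDist_lt_iff (Set.range_nonempty _)).1 hl
  refine ⟨φ l, hNl.trans (hφ.id_le l), m, ?_⟩
  simp only [Real.dist_eq, Function.comp_apply] at hm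
  rw [abs_lt] at hm ⊢
  constructor <;> linarith [hm.1, hm.2]

/-- Lemma 7: if `G(t,u)` is continuous, `ω`-periodic in `t` and Lipschitz in `u` on `U`,
and `υ` is Poisson stable with Poisson sequence `(t_k)` taking values in `U`, where the
Poisson number `κ_ω` of `(t_k)` equals zero, then `t ↦ G(t, υ(t))` is Poisson stable. -/
theorem statement5 {n : ℕ} (U : Set (Fin n → ℝ))
    (G : ℝ → (Fin n → ℝ) → (Fin n → ℝ)) (tk : ℕ → ℝ) (L ω : ℝ)
    (hL : 0 < L) (hω : 0 < ω)
    (hGc : ContinuousOn (fun p : ℝ × (Fin n → ℝ) => G p.1 p.2) (Set.univ ×ˢ U))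
    (hGper : ∀ t : ℝ, ∀ u ∈ U, G (t + ω) u = G t u)
    (hGlip : ∀ t : ℝ, ∀ u₁ ∈ U, ∀ u₂ ∈ U, ‖G t u₁ - G t u₂‖ ≤ L * ‖u₁ - u₂‖)
    (υ : ℝ → (Fin n → ℝ)) (hυ : PoissonStableWith υ tk) (hυU : ∀ t, υ t ∈ U)
    (hκ : poissonNumber tk ω = 0) :
    PoissonStable (fun t => G t (υ t)) := by
  obtain ⟨hυc, ⟨M, hM⟩, htk, hunif⟩ := hυ
  have hchoice : ∀ j : ℕ, ∃ k, j ≤ k ∧ ∃ m : ℤ, |tk k - ω * (m : ℝ)| < 1 / ((j : ℝ) + 1) :=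
    fun j => exists_near_lattice tk hω hκ (by positivity) j
  choose κ hκj m hm using hchoice
  have hκlim : Tendsto κ atTop atTop := tendsto_atTop_mono hκj tendsto_id
  refine ⟨fun j => tk (κ j), ?_, ?_, htk.comp hκlim, ?_⟩
  · exact hGc.comp_continuous (continuous_id.prodMk hυc) fun t => ⟨trivial, hυU t⟩
  · have hcont : Continuous fun t => G t (υ 0) :=
      hGc.comp_continuous (continuous_id.prodMk continuous_const) fun t => ⟨trivial, hυU 0⟩
    have hper : Function.Periodic (fun t => G t (υ 0)) ω := fun t => hGper t _ (hυU 0)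
    obtain ⟨C, hC⟩ := (hper.isBounded_of_continuous hω.ne' hcont).exists_norm_le
    refine ⟨C + L * (M + M), fun x => ?_⟩
    calc ‖G x (υ x)‖ = ‖G x (υ 0) + (G x (υ x) - G x (υ 0))‖ := by congr 1; abel
      _ ≤ ‖G x (υ 0)‖ + ‖G x (υ x) - G x (υ 0)‖ := norm_add_le _ _
      _ ≤ C + L * (M + M) := by
        gcongr
        · exact hC _ ⟨x, rfl⟩
        · refine (hGlip x _ (hυU x) _ (hυU 0)).trans ?_
          gcongr
          exact (norm_sub_le _ _).trans (add_le_add (hM _) (hM _))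
  · intro a b
    rw [Metric.tendstoUniformlyOn_iff]
    intro ε hε
    have hK : IsCompact (Set.Icc (a - 1) (b + 1) ×ˢ (υ '' Set.Icc a b)) :=
      isCompact_Icc.prod (isCompact_Icc.image hυc)
    have hKU : Set.Icc (a - 1) (b + 1) ×ˢ (υ '' Set.Icc a b) ⊆ Set.univ ×ˢ U := by
      rintro ⟨s, _⟩ ⟨-, y, -, rfl⟩
      exact ⟨trivial, hυU y⟩
    obtain ⟨δ, hδ, hGδ⟩ := Metric.uniformContinuousOn_iff.1
      (hK.uniformContinuousOn_of_continuous (hGc.mono hKU)) (ε / 2) (half_pos hε)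
    have hsmall : ∀ᶠ j : ℕ in atTop, 1 / ((j : ℝ) + 1) < min δ 1 :=
      tendsto_one_div_add_atTop_nhds_zero_nat.eventually_lt_const (lt_min hδ one_pos)
    have hυε := hκlim.eventually (Metric.tendstoUniformlyOn_iff.1 (hunif a b) (ε / (2 * L))
      (by positivity))
    filter_upwards [hsmall, hυε] with j hj hυj x hx
    have hd : |tk (κ j) - ω * (m j : ℝ)| < min δ 1 := (hm j).trans hj
    set d := tk (κ j) - ω * (m j : ℝ) with hddef
    have hd1 := abs_lt.1 (hd.trans_le (min_le_right _ _))
    have hperj : G (x + tk (κ j)) (υ x) = G (x + d) (υ x) := by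
      have hper : Function.Periodic (fun t => G t (υ x)) ω := fun t => hGper t _ (hυU x)
      have h := hper.int_mul (m j) (x + d)
      rw [← h, hddef]
      congr 1
      ring
    have h1 : ‖G (x + tk (κ j)) (υ (x + tk (κ j))) - G (x + tk (κ j)) (υ x)‖ < ε / 2 := by
      refine (hGlip _ _ (hυU _) _ (hυU x)).trans_lt ?_
      have h := hυj x hx
      rw [dist_comm, dist_eq_norm] at h
      calc L * ‖υ (x + tk (κ j)) - υ x‖ < L * (ε / (2 * L)) := by gcongr
        _ = ε / 2 := by field_simp
    have h2 : dist (G (x + d) (υ x)) (G x (υ x)) < ε / 2 := by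
      refine hGδ (x + d, υ x) ⟨⟨?_, ?_⟩, x, hx, rfl⟩ (x, υ x) ⟨⟨?_, ?_⟩, x, hx, rfl⟩ ?_
      · linarith [hx.1, hd1.1]
      · linarith [hx.2, hd1.2]
      · linarith [hx.1]
      · linarith [hx.2]
      · rw [Prod.dist_eq, dist_self, Real.dist_eq, add_sub_cancel_left]
        exact max_lt (hd.trans_le (min_le_left _ _)) hδ
    rw [← hperj] at h2
    rw [← dist_eq_norm] at h1
    rw [dist_comm]
    linarith [dist_triangle (G (x + tk (κ j)) (υ (x + tk (κ j)))) (G (x + tk (κ j)) (υ x))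
      (G x (υ x))]
end

section
/- Let U ⊆ ℝ^n and let G : ℝ × U → ℝ^n be continuous, Poisson stable in t with Poisson sequence (t_k) uniformly with respect to u ∈ U (i.e. sup_{u∈U} ‖G(t + t_k, u) − G(t, u)‖ → 0 uniformly for t in every bounded interval), and satisfy ‖G(t, u₁) − G(t, u₂)‖ ≤ L‖u₁ − u₂‖ for all t ∈ ℝ and u₁, u₂ ∈ U, where L > 0. Let υ : ℝ → U be a Poisson stable function admitting the same Poisson sequence (t_k). Then the function t ↦ G(t, υ(t)) is Poisson stable with Poisson sequence (t_k). -/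
/-!
Continuity and boundedness of `t ↦ G t (υ t)` are immediate by composition. For the convergence,
`G (t + t_k) (υ (t + t_k)) - G t (υ t)` is split at `G (t + t_k) (υ t)`: the first difference is
at most `L * ‖υ (t + t_k) - υ t‖`, small uniformly on bounded intervals since `υ` is Poisson
stable, and the second is small by the stability of `G` in `t`, uniformly in `u ∈ U`.
-/

open Filter Topology

/-- Lemma 8: if `G(t,u)` is Poisson stable in `t` with sequence `(t_k)` uniformly with
respect to `u ∈ U`, Lipschitz in `u` on `U`, and `υ` is Poisson stable with the same
Poisson sequence `(t_k)` and values in `U`, then `t ↦ G(t, υ(t))` is Poisson stable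
with Poisson sequence `(t_k)`. -/
theorem statement6 {n : ℕ} (U : Set (Fin n → ℝ))
    (G : ℝ → (Fin n → ℝ) → (Fin n → ℝ)) (tk : ℕ → ℝ) (L : ℝ) (hL : 0 < L)
    (hGc : ContinuousOn (fun p : ℝ × (Fin n → ℝ) => G p.1 p.2) (Set.univ ×ˢ U))
    (hGb : ∃ M, ∀ t : ℝ, ∀ u ∈ U, ‖G t u‖ ≤ M)
    (htk : Tendsto tk atTop atTop)
    (hGps : ∀ a b : ℝ, ∀ ε > 0, ∃ N, ∀ k ≥ N, ∀ t ∈ Set.Icc a b, ∀ u ∈ U,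
      ‖G (t + tk k) u - G t u‖ < ε)
    (hGlip : ∀ t : ℝ, ∀ u₁ ∈ U, ∀ u₂ ∈ U, ‖G t u₁ - G t u₂‖ ≤ L * ‖u₁ - u₂‖)
    (υ : ℝ → (Fin n → ℝ)) (hυ : PoissonStableWith υ tk) (hυU : ∀ t, υ t ∈ U) :
    PoissonStableWith (fun t => G t (υ t)) tk := by
  obtain ⟨hc, -, -, hu⟩ := hυ
  refine ⟨?_, ?_, htk, fun a b => ?_⟩
  · exact hGc.comp_continuous (continuous_id.prodMk hc) fun t => ⟨Set.mem_univ _, hυU t⟩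
  · obtain ⟨M, hM⟩ := hGb
    exact ⟨M, fun t => hM t _ (hυU t)⟩
  · rw [Metric.tendstoUniformlyOn_iff]
    intro ε hε
    obtain ⟨N, hN⟩ := hGps a b (ε / 2) (by positivity)
    filter_upwards [eventually_ge_atTop N,
      Metric.tendstoUniformlyOn_iff.1 (hu a b) (ε / 2 / L) (by positivity)] with k hk hυk x hx
    have h1 := hN k hk x hx (υ x) (hυU x)
    have h2 := hGlip (x + tk k) _ (hυU (x + tk k)) _ (hυU x)
    have h3 := hυk x hx
    rw [dist_comm, dist_eq_norm, lt_div_iff₀' hL] at h3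
    rw [dist_comm, dist_eq_norm]
    have h4 := norm_sub_le_norm_sub_add_norm_sub (G (x + tk k) (υ (x + tk k)))
      (G (x + tk k) (υ x)) (G x (υ x))
    linarith
end

section
/- Let A : ℝ → M_n(ℝ) be a continuous ω-periodic matrix function whose transition matrix X(t,s) satisfies X(t+ω, s+ω) = X(t,s) and ‖X(t,s)‖ ≤ K·e^{−α(t−s)} for all t ≥ s, with constants K ≥ 1, α > 0. Then for every continuous ω-periodic function φ : ℝ → ℝ^n, the function x_φ(t) = ∫_{−∞}^t X(t,s)φ(s) ds is well defined, bounded, and ω-periodic. -/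
/-!
The cocycle identity gives `X t s ∘ X s t = id`, so `s ↦ X t s` is the pointwise inverse of the
differentiable map `s ↦ X s t`. Inversion is continuous on the units of a complete normed ring, so
the integrand `s ↦ X t s (φ s)` is continuous, hence measurable. With `C` a bound for the periodic
function `φ`, the integrand is dominated on `(-∞, t]` by `K C e^{-α(t-s)}`, whose integral is
`K C / α` for every `t`; this gives integrability and the uniform bound. Periodicity is the
substitution `s ↦ s + ω`.
-/

open Filter Topology MeasureTheory

/-- `X t s` is the transition matrix of the linear system `x' = A(t)x`:
`∂X(t,s)/∂t = A(t) X(t,s)`, `X(s,s) = I` and the cocycle property holds.  Matrices are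
modelled as continuous linear operators on `ℝ^n` with the max norm, so that the operator
norm is the maximum-row-sum norm. -/
def IsTransitionMatrix {n : ℕ} (A : ℝ → ((Fin n → ℝ) →L[ℝ] (Fin n → ℝ)))
    (X : ℝ → ℝ → ((Fin n → ℝ) →L[ℝ] (Fin n → ℝ))) : Prop :=
  (∀ s, X s s = ContinuousLinearMap.id ℝ (Fin n → ℝ)) ∧
  (∀ s t, HasDerivAt (fun r => X r s) ((A t).comp (X t s)) t) ∧
  (∀ t u s : ℝ, X t s = (X t u).comp (X u s))

/-- Continuity in the initial time, which is not part of `IsTransitionMatrix`. -/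
lemma IsTransitionMatrix.continuous_right {n : ℕ}
    {A : ℝ → ((Fin n → ℝ) →L[ℝ] (Fin n → ℝ))}
    {X : ℝ → ℝ → ((Fin n → ℝ) →L[ℝ] (Fin n → ℝ))}
    (hX : IsTransitionMatrix A X) (t : ℝ) : Continuous (fun s => X t s) := by
  obtain ⟨hid, hderiv, hcocycle⟩ := hX
  have hmul : ∀ a b, X a b * X b a = 1 := fun a b =>
    (hcocycle a b a).symm.trans (hid a)
  let U : ℝ → ((Fin n → ℝ) →L[ℝ] (Fin n → ℝ))ˣ := fun s =>
    ⟨X s t, X t s, hmul s t, hmul t s⟩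
  have hinv : (fun s => X t s) = fun s => Ring.inverse (X s t) := by
    funext s
    exact (Ring.inverse_unit (U s)).symm
  rw [hinv, continuous_iff_continuousAt]
  intro s
  have h1 : ContinuousAt Ring.inverse (X s t) := NormedRing.inverse_continuousAt (U s)
  exact ContinuousAt.comp (f := fun r => X r t) h1 (hderiv t s).continuousAt

lemma exists_norm_le_of_continuous_periodic {E : Type*} [NormedAddCommGroup E] {φ : ℝ → E} {ω : ℝ}
    (hω : 0 < ω) (hφc : Continuous φ) (hφp : Function.Periodic φ ω) :
    ∃ C, ∀ s, ‖φ s‖ ≤ C := by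
  obtain ⟨C, hC⟩ := (isCompact_Icc (a := (0 : ℝ)) (b := ω)).exists_bound_of_continuousOn
    hφc.continuousOn
  refine ⟨C, fun s => ?_⟩
  obtain ⟨y, hy, hsy⟩ := hφp.exists_mem_Ico₀ hω s
  rw [hsy]
  exact hC y (Set.Ico_subset_Icc_self hy)

/-- For a continuous `ω`-periodic coefficient matrix with exponentially decaying
transition matrix, `x_φ(t) = ∫_{−∞}^t X(t,s) φ(s) ds` is well defined, bounded and
`ω`-periodic whenever `φ` is continuous and `ω`-periodic. -/
theorem statement10 {n : ℕ} (ω K α : ℝ) (hω : 0 < ω) (hK : 1 ≤ K) (hα : 0 < α)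
    (A : ℝ → ((Fin n → ℝ) →L[ℝ] (Fin n → ℝ)))
    (hAc : Continuous A) (hAp : ∀ t, A (t + ω) = A t)
    (X : ℝ → ℝ → ((Fin n → ℝ) →L[ℝ] (Fin n → ℝ)))
    (hX : IsTransitionMatrix A X)
    (hXper : ∀ t s : ℝ, X (t + ω) (s + ω) = X t s)
    (hdecay : ∀ s t : ℝ, s ≤ t → ‖X t s‖ ≤ K * Real.exp (-α * (t - s)))
    (φ : ℝ → (Fin n → ℝ)) (hφc : Continuous φ) (hφp : Function.Periodic φ ω) :
    (∀ t : ℝ, IntegrableOn (fun s => X t s (φ s)) (Set.Iic t)) ∧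
    (∃ M, ∀ t : ℝ, ‖∫ s in Set.Iic t, X t s (φ s)‖ ≤ M) ∧
    Function.Periodic (fun t => ∫ s in Set.Iic t, X t s (φ s)) ω := by
  obtain ⟨C, hC⟩ := exists_norm_le_of_continuous_periodic hω hφc hφp
  -- The dominating function `K C e^{-α(t-s)}`, in the form `const * e^{αs}`.
  have hbound : ∀ t, ∀ s ∈ Set.Iic t,
      ‖X t s (φ s)‖ ≤ K * C * Real.exp (-α * t) * Real.exp (α * s) := by
    intro t s hs
    calc ‖X t s (φ s)‖ ≤ ‖X t s‖ * ‖φ s‖ := (X t s).le_opNorm _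
      _ ≤ K * Real.exp (-α * (t - s)) * C :=
          mul_le_mul (hdecay s t hs) (hC s) (norm_nonneg _) (by positivity)
      _ = K * C * Real.exp (-α * t) * Real.exp (α * s) := by
          rw [show -α * (t - s) = -α * t + α * s by ring, Real.exp_add]
          ring
  have hbound_ae : ∀ t, ∀ᵐ s ∂volume.restrict (Set.Iic t),
      ‖X t s (φ s)‖ ≤ K * C * Real.exp (-α * t) * Real.exp (α * s) := fun t =>
    (ae_restrict_mem measurableSet_Iic).mono (hbound t)
  have hdom : ∀ t, IntegrableOn
      (fun s => K * C * Real.exp (-α * t) * Real.exp (α * s)) (Set.Iic t) := fun t =>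
    (integrableOn_exp_mul_Iic hα t).const_mul _
  refine ⟨fun t => ?_, ⟨K * C / α, fun t => ?_⟩, fun t => ?_⟩
  · exact (hdom t).mono'
      ((hX.continuous_right t).clm_apply hφc).aestronglyMeasurable (hbound_ae t)
  · refine (norm_integral_le_of_norm_le (hdom t) (hbound_ae t)).trans_eq ?_
    rw [integral_const_mul, integral_exp_mul_Iic hα,
      show -α * t = -(α * t) by ring, Real.exp_neg]
    field_simp
  · have hshift := (measurePreserving_add_right (volume : Measure ℝ) ω).setIntegral_preimage_emb
      (measurableEmbedding_addRight ω) (fun s => X (t + ω) s (φ s)) (Set.Iic (t + ω))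
    have hpre : (fun s => s + ω) ⁻¹' Set.Iic (t + ω) = Set.Iic t := by
      ext s
      simp
    simp only [hpre, hXper, hφp _] at hshift
    exact hshift.symm
end

section
/- Let A : ℝ → M_n(ℝ) be a continuous ω-periodic matrix function whose transition matrix X(t,s) satisfies ‖X(t,s)‖ ≤ K·e^{−α(t−s)} for all t ≥ s, with constants K ≥ 1, α > 0. Let ψ : ℝ → ℝ^n be a Poisson stable function with Poisson sequence (t_k) such that additionally sup_{t∈ℝ} ‖A(t + t_k) − A(t)‖ → 0 as k → ∞ (this holds in particular when the Poisson number κ_ω of (t_k) equals zero). Then the function x_ψ(t) = ∫_{−∞}^t X(t,s)ψ(s) ds is Poisson stable with Poisson sequence (t_k). -/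
/-!
After the substitution `s = t - u` the function in question is
`x_ψ(t) = ∫_{u ≥ 0} X(t, t - u) ψ(t - u) du`, whose integrand is dominated by the integrable function
`K e^{-αu} sup ‖ψ‖`, uniformly in `t`. Everything therefore reduces to pointwise convergence of
the integrand under time shifts.

The shifted transition matrix `r ↦ X(r + h, s + h)` solves `y' = A(r + h) y`, hence is an
approximate solution of `y' = A(r) y` whose error is at most `K sup ‖A(r + h) - A(r)‖` on `[s, t]`.
Grönwall's inequality (`norm_shift_sub_le`) shows that `X(t + h, s + h) → X(t, s)` whenever
`A(· + h) → A` uniformly on `[s, t]`, and dominated convergence (`tendsto_shift`) then gives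
`x_ψ(x + h) → x_ψ(x)` along any countably generated filter of shifts `h` along which `A` and `ψ`
converge.

Shifts `h = y - x` with `y → x` give continuity of `x_ψ`. Shifts `h = y - x + t_k` with
`(k, y) → (∞, x)` give locally uniform convergence `x_ψ(· + t_k) → x_ψ`, which on compact
intervals is uniform convergence.
-/


open Filter Topology MeasureTheory

/-- Grönwall estimate for the change of the transition matrix under a time shift `h`. -/
lemma norm_shift_sub_le {n : ℕ} {A : ℝ → ((Fin n → ℝ) →L[ℝ] (Fin n → ℝ))}
    {X : ℝ → ℝ → ((Fin n → ℝ) →L[ℝ] (Fin n → ℝ))} (hX : IsTransitionMatrix A X)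
    {L : NNReal} (hL : ∀ r, ‖A r‖ ≤ L) {K δ s t h : ℝ} (hst : s ≤ t)
    (hK : ∀ a b : ℝ, a ≤ b → ‖X b a‖ ≤ K)
    (hδ : ∀ r ∈ Set.Icc s t, ‖A (r + h) - A r‖ ≤ δ) :
    ‖X (t + h) (s + h) - X t s‖ ≤ gronwallBound 0 L (δ * K) (t - s) := by
  have hf : ∀ r, HasDerivAt (fun r => X (r + h) (s + h))
      ((A (r + h)).comp (X (r + h) (s + h))) r := fun r =>
    (hX.2.1 (s + h) (r + h)).comp_add_const r h
  have hg : ∀ r, HasDerivAt (fun r => X r s) ((A r).comp (X r s)) r := fun r => hX.2.1 s r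
  have key := dist_le_of_approx_trajectories_ODE (K := L) (a := s) (b := t)
    (v := fun r Y => (A r).comp Y) (f := fun r => X (r + h) (s + h)) (g := fun r => X r s)
    (f' := fun r => (A (r + h)).comp (X (r + h) (s + h)))
    (g' := fun r => (A r).comp (X r s)) (εf := δ * K) (εg := 0) (δ := 0)
    (fun r => LipschitzWith.of_dist_le_mul fun Y Z => by
      rw [dist_eq_norm, dist_eq_norm, ← ContinuousLinearMap.comp_sub]
      exact (ContinuousLinearMap.opNorm_comp_le _ _).trans
        (mul_le_mul_of_nonneg_right (hL r) (norm_nonneg _)))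
    (fun r _ => (hf r).continuousAt.continuousWithinAt)
    (fun r _ => (hf r).hasDerivWithinAt)
    (fun r hr => by
      rw [dist_eq_norm, ← ContinuousLinearMap.sub_comp]
      refine (ContinuousLinearMap.opNorm_comp_le _ _).trans ?_
      exact mul_le_mul (hδ r ⟨hr.1, hr.2.le⟩) (hK _ _ (by linarith [hr.1])) (norm_nonneg _)
        ((norm_nonneg _).trans (hδ r ⟨hr.1, hr.2.le⟩)))
    (fun r _ => (hg r).continuousAt.continuousWithinAt)
    (fun r _ => (hg r).hasDerivWithinAt)
    (fun r _ => by simp)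
    (by simp [hX.1]) t ⟨hst, le_rfl⟩
  simpa [dist_eq_norm] using key

/-- Continuity in the initial time, from `X t s = (X s t)⁻¹`. -/
lemma continuous_transition_right {n : ℕ} {A : ℝ → ((Fin n → ℝ) →L[ℝ] (Fin n → ℝ))}
    {X : ℝ → ℝ → ((Fin n → ℝ) →L[ℝ] (Fin n → ℝ))} (hX : IsTransitionMatrix A X) (t : ℝ) :
    Continuous fun s => X t s := by
  have hmul : ∀ a b, X a b * X b a = 1 := fun a b => by
    rw [ContinuousLinearMap.mul_def, ← hX.2.2, hX.1]; rfl
  let U : ℝ → ((Fin n → ℝ) →L[ℝ] (Fin n → ℝ))ˣ := fun s => ⟨X s t, X t s, hmul _ _, hmul _ _⟩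
  have hinv : (fun s => X t s) = fun s => Ring.inverse (X s t) := by
    funext s
    exact (Ring.inverse_unit (U s)).symm
  rw [hinv, continuous_iff_continuousAt]
  intro s
  exact ContinuousAt.comp (f := fun s => X s t) (NormedRing.inverse_continuousAt (U s))
    (hX.2.1 t s).continuousAt

lemma integral_Iic_eq_integral_Ici {E : Type*} [NormedAddCommGroup E] [NormedSpace ℝ E]
    (g : ℝ → E) (t : ℝ) : ∫ s in Set.Iic t, g s = ∫ u in Set.Ici (0 : ℝ), g (t - u) := by
  rw [← integral_indicator measurableSet_Iic, ← integral_indicator measurableSet_Ici,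
    ← integral_sub_left_eq_self _ volume t]
  congr 1
  funext u
  by_cases hu : 0 ≤ u <;> simp [Set.indicator, hu]

/-- Bound for the integrand of `x_ψ` after the substitution `s = t - u`. -/
lemma norm_integrand_le {n : ℕ} {X : ℝ → ℝ → ((Fin n → ℝ) →L[ℝ] (Fin n → ℝ))} {K α M : ℝ}
    (hdecay : ∀ s t : ℝ, s ≤ t → ‖X t s‖ ≤ K * Real.exp (-α * (t - s)))
    {ψ : ℝ → (Fin n → ℝ)} (hM : ∀ x, ‖ψ x‖ ≤ M) (t : ℝ) {u : ℝ} (hu : 0 ≤ u) :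
    ‖X t (t - u) (ψ (t - u))‖ ≤ K * Real.exp (-α * u) * M := by
  have h1 := hdecay (t - u) t (by linarith)
  rw [sub_sub_cancel] at h1
  exact (ContinuousLinearMap.le_opNorm _ _).trans
    (mul_le_mul h1 (hM _) (norm_nonneg _) ((norm_nonneg _).trans h1))

lemma integrable_bound {K α M : ℝ} (hα : 0 < α) :
    IntegrableOn (fun u : ℝ => K * Real.exp (-α * u) * M) (Set.Ici 0) := by
  rw [integrableOn_Ici_iff_integrableOn_Ioi]
  exact ((integrableOn_exp_mul_Ioi (neg_lt_zero.mpr hα) 0).const_mul K).mul_const M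

/-- Dominated convergence for shifts: if `A (· + h) → A` uniformly on bounded intervals and
`ψ (· + h) → ψ` pointwise along a countably generated filter of shifts `h`, then
`x_ψ (x + h) → x_ψ x`. -/
lemma tendsto_shift {n : ℕ} {K α M : ℝ} (hK : 1 ≤ K) (hα : 0 < α)
    {A : ℝ → ((Fin n → ℝ) →L[ℝ] (Fin n → ℝ))} {L : NNReal} (hL : ∀ r, ‖A r‖ ≤ L)
    {X : ℝ → ℝ → ((Fin n → ℝ) →L[ℝ] (Fin n → ℝ))} (hX : IsTransitionMatrix A X)
    (hdecay : ∀ s t : ℝ, s ≤ t → ‖X t s‖ ≤ K * Real.exp (-α * (t - s)))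
    {ψ : ℝ → (Fin n → ℝ)} (hψc : Continuous ψ) (hM : ∀ x, ‖ψ x‖ ≤ M)
    {ι : Type*} {l : Filter ι} [l.IsCountablyGenerated] {h : ι → ℝ}
    (hA : ∀ a b : ℝ, TendstoUniformlyOn (fun i r => A (r + h i)) A l (Set.Icc a b))
    (hψ : ∀ r, Tendsto (fun i => ψ (r + h i)) l (𝓝 (ψ r))) (x : ℝ) :
    Tendsto (fun i => ∫ s in Set.Iic (x + h i), X (x + h i) s (ψ s)) l
      (𝓝 (∫ s in Set.Iic x, X x s (ψ s))) := by
  have hK' : ∀ a b : ℝ, a ≤ b → ‖X b a‖ ≤ K := fun a b hab =>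
    (hdecay a b hab).trans <| mul_le_of_le_one_right (by linarith) <|
      Real.exp_le_one_iff.mpr (by nlinarith)
  simp only [integral_Iic_eq_integral_Ici]
  refine tendsto_integral_filter_of_dominated_convergence
    (fun u : ℝ => K * Real.exp (-α * u) * M) ?_ ?_ (integrable_bound hα) ?_
  · refine Eventually.of_forall fun i => Continuous.aestronglyMeasurable ?_
    have hsub : Continuous fun u : ℝ => x + h i - u := by fun_prop
    exact ((continuous_transition_right hX (x + h i)).comp hsub).clm_apply (hψc.comp hsub)
  · refine Eventually.of_forall fun i => ?_
    filter_upwards [ae_restrict_mem measurableSet_Ici] with u hu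
    exact norm_integrand_le hdecay hM _ hu
  · filter_upwards [ae_restrict_mem measurableSet_Ici] with u hu
    have hu : 0 ≤ u := hu
    have hshift : ∀ i, x + h i - u = x - u + h i := fun i => by ring
    simp only [hshift]
    suffices hT : Tendsto (fun i => X (x + h i) (x - u + h i)) l (𝓝 (X x (x - u))) from
      (isBoundedBilinearMap_apply.continuous.tendsto (X x (x - u), ψ (x - u))).comp
        (hT.prodMk_nhds (hψ (x - u)))
    rw [Metric.tendsto_nhds]
    intro ε hε
    -- the Grönwall bound is continuous in the size `δ` of the perturbation and vanishes at `δ = 0`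
    have hlim : Tendsto (fun δ : ℝ => gronwallBound 0 L (δ * K) (x - (x - u))) (𝓝[>] 0) (𝓝 0) := by
      have hc : Continuous fun δ : ℝ => gronwallBound 0 L (δ * K) (x - (x - u)) :=
        (gronwallBound_continuous_ε 0 L (x - (x - u))).comp (continuous_mul_const K)
      have := hc.tendsto 0
      rw [zero_mul, gronwallBound_ε0_δ0] at this
      exact this.mono_left nhdsWithin_le_nhds
    obtain ⟨δ, hδε, hδ⟩ := ((hlim.eventually_lt_const hε).and self_mem_nhdsWithin).exists
    filter_upwards [Metric.tendstoUniformlyOn_iff.mp (hA (x - u) x) δ hδ] with i hi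
    rw [dist_eq_norm]
    refine (norm_shift_sub_le hX hL (by linarith) hK' fun r hr => ?_).trans_lt hδε
    rw [← dist_eq_norm, dist_comm]
    exact (hi r hr).le

/-- A continuous function converges uniformly on bounded intervals to itself under small shifts. -/
lemma tendstoUniformlyOn_small_shift {E : Type*} [NormedAddCommGroup E] {f : ℝ → E}
    (hf : Continuous f) (x a b : ℝ) :
    TendstoUniformlyOn (fun y r => f (r + (y - x))) f (𝓝 x) (Set.Icc a b) := by
  rw [Metric.tendstoUniformlyOn_iff]
  intro ε hε
  have h1 := isCompact_Icc.uniformContinuousAt_of_continuousAt (s := Set.Icc a b) f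
    (fun r _ => hf.continuousAt) (Metric.dist_mem_uniformity hε)
  obtain ⟨δ, hδ, h2⟩ := Metric.mem_uniformity_dist.mp h1
  filter_upwards [Metric.ball_mem_nhds x hδ] with y hy r hr
  refine h2 (a := r) (b := r + (y - x)) ?_ hr
  rw [Metric.mem_ball, Real.dist_eq] at hy
  rw [Real.dist_eq, abs_sub_comm, add_sub_cancel_left]
  exact hy

/-- Locally uniform convergence `f (· + t_k) → f` upgrades to uniform convergence on bounded
intervals under the combined shifts `y - x + t_k` as `(k, y) → (∞, x)`. -/
lemma tendstoUniformlyOn_combined_shift {E : Type*} [NormedAddCommGroup E] {f : ℝ → E}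
    (hf : Continuous f) {t : ℕ → ℝ}
    (ht : ∀ a b : ℝ, TendstoUniformlyOn (fun k r => f (r + t k)) f atTop (Set.Icc a b))
    (x a b : ℝ) :
    TendstoUniformlyOn (fun (p : ℕ × ℝ) r => f (r + (p.2 - x + t p.1))) f (atTop ×ˢ 𝓝 x)
      (Set.Icc a b) := by
  rw [Metric.tendstoUniformlyOn_iff]
  intro ε hε
  have h1 := Metric.tendstoUniformlyOn_iff.mp (ht (a - 1) (b + 1)) (ε / 2) (half_pos hε)
  have h2 := Metric.tendstoUniformlyOn_iff.mp (tendstoUniformlyOn_small_shift hf x a b) (ε / 2)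
    (half_pos hε)
  filter_upwards [h1.prod_mk (h2.and (Metric.ball_mem_nhds x one_pos))] with p hp r hr
  obtain ⟨hp1, hp2, hp3⟩ := hp
  rw [Real.dist_eq, abs_lt] at hp3
  have h3 := hp1 (r + (p.2 - x)) ⟨by linarith [hr.1], by linarith [hr.2]⟩
  rw [add_assoc] at h3
  linarith [dist_triangle (f r) (f (r + (p.2 - x))) (f (r + (p.2 - x + t p.1))), hp2 r hr]

/-- If `ψ` is Poisson stable with Poisson sequence `(t_k)` and additionally
`sup_t ‖A(t+t_k) − A(t)‖ → 0`, then `x_ψ(t) = ∫_{−∞}^t X(t,s) ψ(s) ds` is Poisson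
stable with Poisson sequence `(t_k)`. -/
theorem statement11 {n : ℕ} (ω K α : ℝ) (hω : 0 < ω) (hK : 1 ≤ K) (hα : 0 < α)
    (A : ℝ → ((Fin n → ℝ) →L[ℝ] (Fin n → ℝ)))
    (hAc : Continuous A) (hAp : ∀ t, A (t + ω) = A t)
    (X : ℝ → ℝ → ((Fin n → ℝ) →L[ℝ] (Fin n → ℝ)))
    (hX : IsTransitionMatrix A X)
    (hdecay : ∀ s t : ℝ, s ≤ t → ‖X t s‖ ≤ K * Real.exp (-α * (t - s)))
    (ψ : ℝ → (Fin n → ℝ)) (tk : ℕ → ℝ) (hψ : PoissonStableWith ψ tk)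
    (hA : Tendsto (fun k => ⨆ t : ℝ, ‖A (t + tk k) - A t‖) atTop (𝓝 0)) :
    PoissonStableWith (fun t => ∫ s in Set.Iic t, X t s (ψ s)) tk := by
  obtain ⟨hψc, ⟨M, hM⟩, htk, hψu⟩ := hψ
  obtain ⟨L, hL⟩ : ∃ L : NNReal, ∀ r, ‖A r‖ ≤ L := by
    obtain ⟨C, hC⟩ := (Function.Periodic.isBounded_of_continuous hAp hω.ne' hAc).exists_norm_le
    exact ⟨C.toNNReal, fun r => (hC _ ⟨r, rfl⟩).trans (Real.le_coe_toNNReal C)⟩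
  -- `A` is bounded, so the supremum in the hypothesis is a genuine one
  have hAu : ∀ a b : ℝ, TendstoUniformlyOn (fun k r => A (r + tk k)) A atTop (Set.Icc a b) := by
    intro a b
    rw [Metric.tendstoUniformlyOn_iff]
    intro ε hε
    filter_upwards [hA.eventually_lt_const hε] with k hk r _
    refine lt_of_le_of_lt ?_ hk
    rw [dist_comm, dist_eq_norm]
    refine le_ciSup (f := fun t : ℝ => ‖A (t + tk k) - A t‖) ⟨L + L, ?_⟩ r
    rintro _ ⟨r, rfl⟩
    exact (norm_sub_le _ _).trans (add_le_add (hL _) (hL _))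
  have hcont : Continuous fun t => ∫ s in Set.Iic t, X t s (ψ s) := by
    rw [continuous_iff_continuousAt]
    intro x
    have := tendsto_shift (l := 𝓝 x) (h := fun y => y - x) hK hα hL hX hdecay hψc hM
      (tendstoUniformlyOn_small_shift hAc x)
      (fun r => (tendstoUniformlyOn_small_shift hψc x r r).tendsto_at ⟨le_rfl, le_rfl⟩) x
    simp only [add_sub_cancel] at this
    exact this
  refine ⟨hcont, ⟨∫ u in Set.Ici (0 : ℝ), K * Real.exp (-α * u) * M, fun t => ?_⟩, htk,
    fun a b => ?_⟩
  · simp only [integral_Iic_eq_integral_Ici]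
    refine norm_integral_le_of_norm_le (integrable_bound hα) ?_
    filter_upwards [ae_restrict_mem measurableSet_Ici] with u hu
    exact norm_integrand_le hdecay hM t hu
  · rw [← tendstoLocallyUniformlyOn_iff_tendstoUniformlyOn_of_compact isCompact_Icc,
      tendstoLocallyUniformlyOn_iff_forall_tendsto]
    intro x _
    have h1 := tendsto_shift (l := atTop ×ˢ 𝓝 x) (h := fun p : ℕ × ℝ => p.2 - x + tk p.1)
      hK hα hL hX hdecay hψc hM (tendstoUniformlyOn_combined_shift hAc hAu x)
      (fun r => (tendstoUniformlyOn_combined_shift hψc hψu x r r).tendsto_at ⟨le_rfl, le_rfl⟩) x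
    have hshift : ∀ p : ℕ × ℝ, x + (p.2 - x + tk p.1) = p.2 + tk p.1 := fun p => by ring
    simp only [hshift] at h1
    have h2 := (hcont.tendsto x).comp (tendsto_snd (f := (atTop : Filter ℕ)) (g := 𝓝 x))
    exact ((h2.prodMk_nhds h1).mono_right (nhds_le_uniformity _)).mono_left
      (prod_mono_right _ nhdsWithin_le_nhds)
end

section
/- Let η : ℤ → [0,1] be a sequence and define the piecewise constant function Ω : ℝ → ℝ by Ω(t) = η_i for t ∈ [i, i+1), i ∈ ℤ, and Θ(t) = ∫_{−∞}^t e^{−2(t−s)}Ω(s) ds. Then Θ is well defined and bounded with sup_{t∈ℝ}|Θ(t)| ≤ 1/2. If moreover there exists a sequence of positive integers ζ_n → ∞ such that for every bounded interval of integers, max over i in that interval of |η_{i+ζ_n} − η_i| → 0 as n → ∞, then Θ(t + ζ_n) → Θ(t) as n → ∞ uniformly on every bounded interval of ℝ; that is, Θ is a Poisson stable function with Poisson sequence (ζ_n). -/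
/-!
Since `|Ω| ≤ 1` and `∫_{-∞}^t e^{-2(t-s)} ds = 1/2`, the integral defining `Θ` converges absolutely
and is bounded by `1/2`. Continuity follows from `Θ(t) = e^{-2t} ∫_{-∞}^t e^{2s} Ω(s) ds`.

Translating `Θ` by an integer `n` amounts to translating the sequence `η` by `n`
(`Theta_add_natCast`), so the uniform convergence reduces to comparing `Θ` for two sequences
`η, θ : ℤ → [0,1]` that are `δ`-close on the integers of a window `[⌊c⌋, ⌊b⌋]`. For `s ≤ b` one has
`|Ω_η(s) - Ω_θ(s)| ≤ δ + e^{c-s}`: the first term serves for `s ≥ c`, and the second one is at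
least `1` for `s < c`. Integrating against the kernel gives
`|Θ_η(t) - Θ_θ(t)| ≤ δ/2 + e^{c-t}` for `t ≤ b` (`abs_Theta_sub_le`), which is uniformly small on
`[a, b]` once `c` is far enough to the left of `a`.
-/

open Filter Topology MeasureTheory

/-- The piecewise constant function `Ω(t) = η_i` for `t ∈ [i, i+1)`. -/
noncomputable def piecewiseOmega (η : ℤ → ℝ) (t : ℝ) : ℝ := η ⌊t⌋

/-- `Θ(t) = ∫_{−∞}^t e^{−2(t−s)} Ω(s) ds`. -/
noncomputable def Theta (η : ℤ → ℝ) (t : ℝ) : ℝ :=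
  ∫ s in Set.Iic t, Real.exp (-2 * (t - s)) * piecewiseOmega η s

lemma measurable_piecewiseOmega (η : ℤ → ℝ) : Measurable (piecewiseOmega η) :=
  (measurable_from_top (f := η)).comp Int.measurable_floor

lemma abs_piecewiseOmega_le {η : ℤ → ℝ} (hη : ∀ i, η i ∈ Set.Icc (0 : ℝ) 1) (s : ℝ) :
    |piecewiseOmega η s| ≤ 1 :=
  abs_le.2 ⟨by linarith [(hη ⌊s⌋).1, show piecewiseOmega η s = η ⌊s⌋ from rfl], (hη ⌊s⌋).2⟩

lemma kernel_eq (t s : ℝ) :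
    Real.exp (-2 * (t - s)) = Real.exp (-2 * t) * Real.exp (2 * s) := by
  rw [← Real.exp_add]; ring_nf

lemma integrableOn_kernel (t : ℝ) :
    IntegrableOn (fun s => Real.exp (-2 * (t - s))) (Set.Iic t) := by
  simp_rw [kernel_eq]
  exact (integrableOn_exp_mul_Iic two_pos t).const_mul _

lemma integral_kernel (t : ℝ) : ∫ s in Set.Iic t, Real.exp (-2 * (t - s)) = 1 / 2 := by
  simp_rw [kernel_eq]
  rw [integral_const_mul, integral_exp_mul_Iic two_pos, ← mul_div_assoc, ← Real.exp_add]
  simp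

lemma integrableOn_exp_two_mul_piecewiseOmega {η : ℤ → ℝ}
    (hη : ∀ i, η i ∈ Set.Icc (0 : ℝ) 1) (t : ℝ) :
    IntegrableOn (fun s => Real.exp (2 * s) * piecewiseOmega η s) (Set.Iic t) :=
  (integrableOn_exp_mul_Iic two_pos t).mul_bdd (c := 1)
    (measurable_piecewiseOmega η).aestronglyMeasurable
    (Eventually.of_forall (abs_piecewiseOmega_le hη))

lemma integrableOn_Theta {η : ℤ → ℝ} (hη : ∀ i, η i ∈ Set.Icc (0 : ℝ) 1) (t : ℝ) :
    IntegrableOn (fun s => Real.exp (-2 * (t - s)) * piecewiseOmega η s) (Set.Iic t) :=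
  (integrableOn_kernel t).mul_bdd (c := 1)
    (measurable_piecewiseOmega η).aestronglyMeasurable
    (Eventually.of_forall (abs_piecewiseOmega_le hη))

lemma abs_Theta_le {η : ℤ → ℝ} (hη : ∀ i, η i ∈ Set.Icc (0 : ℝ) 1) (t : ℝ) :
    |Theta η t| ≤ 1 / 2 := by
  rw [← integral_kernel t, ← Real.norm_eq_abs]
  refine norm_integral_le_of_norm_le (integrableOn_kernel t) (Eventually.of_forall fun s => ?_)
  rw [norm_mul, Real.norm_eq_abs, Real.abs_exp]
  exact mul_le_of_le_one_right (Real.exp_pos _).le (abs_piecewiseOmega_le hη s)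

lemma continuous_Theta {η : ℤ → ℝ} (hη : ∀ i, η i ∈ Set.Icc (0 : ℝ) 1) :
    Continuous (Theta η) := by
  have hG := integrableOn_exp_two_mul_piecewiseOmega hη
  have hΘ : Theta η = fun t => Real.exp (-2 * t) *
      ((∫ s in Set.Iic 0, Real.exp (2 * s) * piecewiseOmega η s) +
        ∫ s in (0 : ℝ)..t, Real.exp (2 * s) * piecewiseOmega η s) := by
    funext t
    rw [← intervalIntegral.integral_Iic_sub_Iic (hG 0) (hG t), add_sub_cancel,
      ← integral_const_mul, Theta]
    simp_rw [kernel_eq, mul_assoc]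
  have hprim : Continuous fun t =>
      ∫ s in (0 : ℝ)..t, Real.exp (2 * s) * piecewiseOmega η s :=
    intervalIntegral.continuous_primitive
      (fun a b => ⟨(hG b).mono_set fun _ hx => hx.2, (hG a).mono_set fun _ hx => hx.2⟩) 0
  rw [hΘ]
  fun_prop

lemma Theta_add_natCast (η : ℤ → ℝ) (n : ℕ) (t : ℝ) :
    Theta η (t + n) = Theta (fun i => η (i + n)) t := by
  have h := (measurePreserving_add_right volume (n : ℝ)).setIntegral_preimage_emb
    (measurableEmbedding_addRight (n : ℝ))
    (fun s => Real.exp (-2 * (t + n - s)) * piecewiseOmega η s) (Set.Iic (t + n))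
  rw [Theta, ← h, Theta]
  simp [piecewiseOmega]

/-- If two `[0,1]`-valued sequences are `δ`-close on a window of integers, the corresponding
functions `Θ` are close to the left of `b`, up to an error `e^{c-t}` accounting for the
uncontrolled past before `c`. -/
lemma abs_Theta_sub_le {η θ : ℤ → ℝ} (hη : ∀ i, η i ∈ Set.Icc (0 : ℝ) 1)
    (hθ : ∀ i, θ i ∈ Set.Icc (0 : ℝ) 1) {b c δ : ℝ} (hδ : 0 ≤ δ)
    (h : ∀ i : ℤ, ⌊c⌋ ≤ i → i ≤ ⌊b⌋ → |η i - θ i| ≤ δ) {t : ℝ} (ht : t ≤ b) :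
    |Theta η t - Theta θ t| ≤ δ / 2 + Real.exp (c - t) := by
  have hexp := integrableOn_exp_Iic t
  have hbound : ∀ s ≤ t, |piecewiseOmega η s - piecewiseOmega θ s| ≤ δ + Real.exp (c - s) := by
    intro s hs
    rcases le_or_gt c s with hcs | hcs
    · have := h ⌊s⌋ (Int.floor_mono hcs) (Int.floor_mono (hs.trans ht))
      exact this.trans (le_add_of_nonneg_right (Real.exp_pos _).le)
    · have h1 : |piecewiseOmega η s - piecewiseOmega θ s| ≤ 1 := by
        have h2 := hη ⌊s⌋
        have h3 := hθ ⌊s⌋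
        simp only [piecewiseOmega]
        exact abs_le.2 ⟨by linarith [h2.1, h3.2], by linarith [h2.2, h3.1]⟩
      linarith [Real.one_le_exp (sub_pos.2 hcs).le]
  have hval : ∫ s in Set.Iic t,
      (Real.exp (-2 * (t - s)) * δ + Real.exp (c - 2 * t) * Real.exp s) =
      δ / 2 + Real.exp (c - t) := by
    rw [integral_add ((integrableOn_kernel t).mul_const δ) (hexp.const_mul _),
      integral_mul_const, integral_const_mul, integral_kernel, integral_exp_Iic,
      ← Real.exp_add]
    ring_nf
  rw [Theta, Theta, ← integral_sub (integrableOn_Theta hη t) (integrableOn_Theta hθ t), ← hval,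
    ← Real.norm_eq_abs]
  refine norm_integral_le_of_norm_le
    (((integrableOn_kernel t).mul_const δ).add (hexp.const_mul _))
    ((ae_restrict_iff' measurableSet_Iic).2 (Eventually.of_forall fun s hs => ?_))
  rw [← mul_sub, norm_mul, Real.norm_eq_abs, Real.abs_exp]
  calc _ ≤ Real.exp (-2 * (t - s)) * (δ + Real.exp (c - s)) :=
        mul_le_mul_of_nonneg_left (hbound s hs) (Real.exp_pos _).le
    _ = _ := by
        rw [mul_add, ← Real.exp_add, ← Real.exp_add]
        ring_nf

/-- For a sequence `η : ℤ → [0,1]`, the function `Θ` is well defined and bounded by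
`1/2`; if moreover there is a sequence of positive integers `ζ_n → ∞` along which `η`
returns to itself uniformly on bounded intervals of integers, then
`Θ(t + ζ_n) → Θ(t)` uniformly on every bounded interval, i.e. `Θ` is Poisson stable
with Poisson sequence `(ζ_n)`. -/
theorem statement18 (η : ℤ → ℝ) (hη : ∀ i, η i ∈ Set.Icc (0 : ℝ) 1) :
    -- well defined
    (∀ t : ℝ, IntegrableOn (fun s => Real.exp (-2 * (t - s)) * piecewiseOmega η s)
      (Set.Iic t)) ∧
    -- bounded with `sup_t |Θ(t)| ≤ 1/2`
    (∀ t : ℝ, |Theta η t| ≤ 1 / 2) ∧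
    -- Poisson stability
    (∀ ζ : ℕ → ℕ, (∀ k, 0 < ζ k) → Tendsto (fun k => (ζ k : ℝ)) atTop atTop →
      (∀ a b : ℤ, ∀ ε > 0, ∃ N, ∀ k ≥ N, ∀ i : ℤ, a ≤ i → i ≤ b →
        |η (i + ζ k) - η i| < ε) →
      Continuous (Theta η) ∧
      ∀ a b : ℝ, TendstoUniformlyOn (fun k t => Theta η (t + ζ k)) (Theta η)
        atTop (Set.Icc a b)) := by
  refine ⟨integrableOn_Theta hη, abs_Theta_le hη, fun ζ _ _ hζ => ⟨continuous_Theta hη, ?_⟩⟩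
  intro a b
  rw [Metric.tendstoUniformlyOn_iff]
  intro ε hε
  -- `c` is chosen so that the contribution `e^{c-t}` of the past is at most `ε / 4` for `t ≥ a`.
  set c : ℝ := a + Real.log (ε / 4) with hc
  obtain ⟨N, hN⟩ := hζ ⌊c⌋ ⌊b⌋ ε hε
  filter_upwards [eventually_ge_atTop N] with k hk t ht
  rw [dist_comm, Real.dist_eq, Theta_add_natCast]
  have h := abs_Theta_sub_le (fun i => hη (i + ζ k)) hη hε.le
    (fun i h1 h2 => (hN k hk i h1 h2).le) ht.2
  have hexp : Real.exp (c - t) ≤ ε / 4 := by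
    rw [← Real.exp_log (show 0 < ε / 4 by positivity)]
    exact Real.exp_le_exp.2 (by linarith [ht.1])
  linarith
end
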